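/- Let (X, f_{1,∞}) be an NDS, r ∈ ℕ and a = (a_1,…,a_r) ∈ ℕ^r. Then (X, f_{1,∞}) is strongly multi-transitive if and only if the product NDS (X^r, f_{1,∞}^{[a]}) is strongly multi-transitive, where f_{1,∞}^{[a]} = f_{1,∞}^{[a_1]} × ⋯ × f_{1,∞}^{[a_r]} acts coordinatewise on X^r. -/

import Mathlib

open Set Filter

section NDSDefs

variable {X : Type*}

/-- `nComp f i n` is the composition `f (i+n-1) ∘ ⋯ ∘ f (i+1) ∘ f i`.
Here `f` is the 0-indexed sequence of maps of the NDS (so `f 0` is the paper's `f₁`),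
and `nComp f 0 n` is the paper's `f₁ⁿ`. -/
def nComp (f : ℕ → X → X) (i : ℕ) : ℕ → X → X
  | 0 => id
  | n + 1 => f (i + n) ∘ nComp f i n

/-- The `k`-th iterate NDS `f^{[k]}`: its `n`-th map (0-indexed) is `f_{kn+1}^{k}`
in the paper's notation, i.e. the composition of `k` maps of `f` starting at index `k*n`. -/
def iterNDS (f : ℕ → X → X) (k : ℕ) : ℕ → X → X :=
  fun n => nComp f (k * n) k

/-- The product NDS `f^{[a]} = f^{[a 0]} × ⋯ × f^{[a (r-1)]}` on `Fin r → X`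
for a vector `a : Fin r → ℕ`. -/
def vecIter (f : ℕ → X → X) {r : ℕ} (a : Fin r → ℕ) : ℕ → (Fin r → X) → Fin r → X :=
  fun n x i => iterNDS f (a i) n (x i)

section Topo

variable [TopologicalSpace X]

/-- Topological transitivity of an NDS. -/
def NDSTransitive (f : ℕ → X → X) : Prop :=
  ∀ U V : Set X, IsOpen U → U.Nonempty → IsOpen V → V.Nonempty →
    ∃ n : ℕ, 1 ≤ n ∧ (nComp f 0 n '' U ∩ V).Nonempty

/-- Multi-transitivity of an NDS. -/
def MultiTransitive (f : ℕ → X → X) : Prop :=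
  ∀ m : ℕ, 1 ≤ m → ∀ U V : Fin m → Set X,
    (∀ i, IsOpen (U i)) → (∀ i, (U i).Nonempty) →
    (∀ i, IsOpen (V i)) → (∀ i, (V i).Nonempty) →
    ∃ l : ℕ, 1 ≤ l ∧ ∀ i : Fin m, (nComp f 0 ((i.1 + 1) * l) '' U i ∩ V i).Nonempty

/-- Multi-transitivity of an NDS with respect to a vector `a`. -/
def MultiTransWrt (f : ℕ → X → X) {p : ℕ} (a : Fin p → ℕ) : Prop :=
  ∀ U V : Fin p → Set X,
    (∀ i, IsOpen (U i)) → (∀ i, (U i).Nonempty) →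
    (∀ i, IsOpen (V i)) → (∀ i, (V i).Nonempty) →
    ∃ l : ℕ, 1 ≤ l ∧ ∀ i : Fin p, (nComp f 0 (a i * l) '' U i ∩ V i).Nonempty

/-- Strong multi-transitivity of an NDS: multi-transitivity with respect to every
vector of positive integers. -/
def StronglyMultiTransitive (f : ℕ → X → X) : Prop :=
  ∀ p : ℕ, 1 ≤ p → ∀ a : Fin p → ℕ, (∀ i, 1 ≤ a i) → MultiTransWrt f a

/-- Weak mixing of order `n` of an NDS. -/
def WeaklyMixingOfOrder (f : ℕ → X → X) (n : ℕ) : Prop :=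
  ∀ U V : Fin n → Set X,
    (∀ i, IsOpen (U i)) → (∀ i, (U i).Nonempty) →
    (∀ i, IsOpen (V i)) → (∀ i, (V i).Nonempty) →
    ∃ m : ℕ, 1 ≤ m ∧ ∀ i : Fin n, (nComp f 0 m '' U i ∩ V i).Nonempty

/-- Weak mixing of all orders of an NDS. -/
def WeaklyMixingAllOrders (f : ℕ → X → X) : Prop :=
  ∀ n : ℕ, 2 ≤ n → WeaklyMixingOfOrder f n

/-- Mild mixing of an NDS: the product with any transitive NDS (on a compact
metric space, with continuous maps) is transitive. -/
def MildlyMixing (f : ℕ → X → X) : Prop :=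
  ∀ (Y : Type) [MetricSpace Y] [CompactSpace Y] (g : ℕ → Y → Y),
    (∀ n, Continuous (g n)) → NDSTransitive g →
      NDSTransitive (fun n (p : X × Y) => (f n p.1, g n p.2))

/-- Δ-transitivity of an NDS. -/
def DeltaTransitive (f : ℕ → X → X) : Prop :=
  ∀ m : ℕ, 1 ≤ m → ∃ Y : Set X, Dense Y ∧ IsGδ Y ∧
    ∀ x ∈ Y, Dense {y : Fin m → X | ∃ n : ℕ, 1 ≤ n ∧ y = fun i => nComp f 0 ((i.1 + 1) * n) x}

/-- Δ-mixing of an NDS. -/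
def DeltaMixing (f : ℕ → X → X) : Prop :=
  ∀ m : ℕ, 1 ≤ m → ∀ A : Set ℕ, A.Infinite → 0 ∉ A →
    ∃ Y : Set X, Dense Y ∧ IsGδ Y ∧
      ∀ x ∈ Y, Dense {y : Fin m → X | ∃ n ∈ A, y = fun i => nComp f 0 ((i.1 + 1) * n) x}

/-- The set `N_{f_{1,∞}}(U,V)` of (positive) hitting times. -/
def hitTimes (f : ℕ → X → X) (U V : Set X) : Set ℕ :=
  {n : ℕ | 1 ≤ n ∧ (nComp f 0 n '' U ∩ V).Nonempty}

/-- A set of positive integers is syndetic if it has bounded gaps. -/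
def Syndetic (A : Set ℕ) : Prop :=
  ∃ M : ℕ, ∀ i : ℕ, 1 ≤ i → ∃ j ∈ A, i ≤ j ∧ j ≤ i + M

/-- A set of positive integers is thick if it contains arbitrarily long runs. -/
def ThickSet (A : Set ℕ) : Prop :=
  ∀ p : ℕ, ∃ n : ℕ, 1 ≤ n ∧ ∀ j ≤ p, n + j ∈ A

/-- A set of positive integers is thickly syndetic. -/
def ThicklySyndetic (A : Set ℕ) : Prop :=
  ∀ l : ℕ, Syndetic {m : ℕ | ∀ j ≤ l, m + j ∈ A}

/-- Thick transitivity of an NDS. -/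
def ThicklyTransitive (f : ℕ → X → X) : Prop :=
  ∀ U V : Set X, IsOpen U → U.Nonempty → IsOpen V → V.Nonempty →
    ThickSet (hitTimes f U V)

/-- Thickly syndetic transitivity of an NDS. -/
def ThicklySyndeticallyTransitive (f : ℕ → X → X) : Prop :=
  ∀ U V : Set X, IsOpen U → U.Nonempty → IsOpen V → V.Nonempty →
    ThicklySyndetic (hitTimes f U V)

/-- Total transitivity of an NDS: every iterate `f^{[n]}` is transitive. -/
def TotallyTransitive (f : ℕ → X → X) : Prop :=
  ∀ n : ℕ, 1 ≤ n → NDSTransitive (iterNDS f n)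

/-- An NDS is feeble open if each map sends nonempty open sets to sets with
nonempty interior. -/
def FeebleOpen (f : ℕ → X → X) : Prop :=
  ∀ i : ℕ, ∀ U : Set X, IsOpen U → U.Nonempty → (interior (f i '' U)).Nonempty

/-- Strong multi-transitivity of an autonomous system `(X, g)`. -/
def ADSStronglyMultiTransitive (g : X → X) : Prop :=
  ∀ m : ℕ, 1 ≤ m → ∀ a : Fin m → ℕ, (∀ j, 1 ≤ a j) →
    ∀ U V : Fin m → Set X,
      (∀ j, IsOpen (U j)) → (∀ j, (U j).Nonempty) →
      (∀ j, IsOpen (V j)) → (∀ j, (V j).Nonempty) →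
      ∃ l : ℕ, 1 ≤ l ∧ ∀ j : Fin m, (g^[a j * l] '' U j ∩ V j).Nonempty

/-- Δ-transitivity of an autonomous system `(X, g)`. -/
def ADSDeltaTransitive (g : X → X) : Prop :=
  ∀ m : ℕ, 1 ≤ m → ∃ Y : Set X, Dense Y ∧ IsGδ Y ∧
    ∀ x ∈ Y, Dense {y : Fin m → X | ∃ n : ℕ, 1 ≤ n ∧ y = fun i => g^[(i.1 + 1) * n] x}

/-- Thickly syndetic transitivity of an autonomous system `(X, g)`. -/
def ADSThicklySyndeticallyTransitive (g : X → X) : Prop :=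
  ∀ U V : Set X, IsOpen U → U.Nonempty → IsOpen V → V.Nonempty →
    ThicklySyndetic {n : ℕ | 1 ≤ n ∧ (g^[n] '' U ∩ V).Nonempty}

end Topo

section MetricDefs

variable [MetricSpace X]

/-- The compositions `f_r^k` converge collectively to the iterates `g^k`. -/
def CollectiveConvergence (f : ℕ → X → X) (g : X → X) : Prop :=
  ∀ ε : ℝ, 0 < ε → ∃ r₀ : ℕ, ∀ r ≥ r₀, ∀ k : ℕ, 1 ≤ k → ∀ x : X,
    dist (nComp f r k x) (g^[k] x) < ε

/-- Chain mixing of an NDS. -/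
def NDSChainMixing (f : ℕ → X → X) : Prop :=
  ∀ x y : X, ∀ δ : ℝ, 0 < δ → ∃ N : ℕ, 1 ≤ N ∧ ∀ n ≥ N,
    ∃ c : ℕ → X, c 0 = x ∧ c n = y ∧ ∀ i < n, dist (f i (c i)) (c (i + 1)) < δ

/-- Chain transitivity of an NDS. -/
def NDSChainTransitive (f : ℕ → X → X) : Prop :=
  ∀ x y : X, ∀ δ : ℝ, 0 < δ → ∃ n : ℕ, 1 ≤ n ∧
    ∃ c : ℕ → X, c 0 = x ∧ c n = y ∧ ∀ i < n, dist (f i (c i)) (c (i + 1)) < δ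

/-- The shadowing property of an NDS. -/
def NDSShadowing (f : ℕ → X → X) : Prop :=
  ∀ ε : ℝ, 0 < ε → ∃ δ : ℝ, 0 < δ ∧ ∀ n : ℕ, ∀ c : ℕ → X,
    (∀ i < n, dist (f i (c i)) (c (i + 1)) < δ) →
      ∃ z : X, ∀ i ≤ n, dist (nComp f 0 i z) (c i) < ε

end MetricDefs

end NDSDefs

/-!
After `n` steps, coordinate `i` of `f^{[a]}` has followed `f` for `a i * n` steps. So a simultaneous
hit of boxes in `X^r` at times `b j * l` is a simultaneous hit of their sides at times
`a i * b j * l`, and every nonempty open set contains a nonempty open box. Conversely, `f^{[a i]}`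
is a factor of `f^{[a]}`, and a hit of `f^{[k]}` with parameter `l` is a hit of `f` with
parameter `k * l`.
-/

section Compositions

variable {X Y : Type*}

theorem nComp_add (f : ℕ → X → X) (i m n : ℕ) :
    nComp f i (m + n) = nComp f (i + m) n ∘ nComp f i m := by
  induction n with
  | zero => rfl
  | succ n ih =>
    calc nComp f i (m + n + 1)
        = f (i + m + n) ∘ nComp f i (m + n) := by rw [nComp, Nat.add_assoc]
      _ = nComp f (i + m) (n + 1) ∘ nComp f i m := by rw [ih]; rfl

theorem nComp_iterNDS (f : ℕ → X → X) (k m n : ℕ) :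
    nComp (iterNDS f k) m n = nComp f (k * m) (k * n) := by
  induction n with
  | zero => rfl
  | succ n ih =>
    calc nComp (iterNDS f k) m (n + 1)
        = nComp f (k * m + k * n) k ∘ nComp f (k * m) (k * n) := by
          rw [nComp, ih, iterNDS, Nat.mul_add]
      _ = nComp f (k * m) (k * (n + 1)) := by rw [← nComp_add, Nat.mul_succ]

theorem semiconj_nComp {f : ℕ → X → X} {g : ℕ → Y → Y} {π : X → Y}
    (hπ : ∀ n, Function.Semiconj π (f n) (g n)) (i n : ℕ) :
    Function.Semiconj π (nComp f i n) (nComp g i n) := by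
  induction n with
  | zero => exact .id_right
  | succ n ih => exact (hπ (i + n)).comp_right ih

theorem semiconj_eval_vecIter (f : ℕ → X → X) {r : ℕ} (a : Fin r → ℕ) (i : Fin r) (n : ℕ) :
    Function.Semiconj (Function.eval i) (vecIter f a n) (iterNDS f (a i) n) :=
  fun _ => rfl

theorem nComp_vecIter (f : ℕ → X → X) {r : ℕ} (a : Fin r → ℕ) (m n : ℕ) :
    nComp (vecIter f a) m n = Pi.map fun i => nComp f (a i * m) (a i * n) := by
  funext x i
  rw [Pi.map_apply, ← nComp_iterNDS]
  exact semiconj_nComp (semiconj_eval_vecIter f a i) m n x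

end Compositions

section Boxes

variable {ι : Type*} {A B : ι → Type*}

theorem piMap_image_univ_pi_inter_nonempty_iff {g : ∀ i, A i → B i} {u : ∀ i, Set (A i)}
    {v : ∀ i, Set (B i)} :
    (Pi.map g '' univ.pi u ∩ univ.pi v).Nonempty ↔ ∀ i, (g i '' u i ∩ v i).Nonempty := by
  rw [piMap_image_univ_pi, ← pi_inter_distrib, univ_pi_nonempty_iff]

theorem exists_univ_pi_subset_of_isOpen [Finite ι] [∀ i, TopologicalSpace (A i)]
    {s : Set (∀ i, A i)} (hs : IsOpen s) (hne : s.Nonempty) :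
    ∃ u : ∀ i, Set (A i), (∀ i, IsOpen (u i)) ∧ (∀ i, (u i).Nonempty) ∧ univ.pi u ⊆ s := by
  obtain ⟨x, hx⟩ := hne
  obtain ⟨u, hu, hus⟩ := isOpen_pi_iff'.1 hs x hx
  exact ⟨u, fun i => (hu i).1, fun i => ⟨x i, (hu i).2⟩, hus⟩

end Boxes

namespace StronglyMultiTransitive

variable {X Y : Type*} [TopologicalSpace X] [TopologicalSpace Y] {f : ℕ → X → X}

theorem exists_forall_nonempty {ι : Type*} [Finite ι] (h : StronglyMultiTransitive f)
    {a : ι → ℕ} (ha : ∀ i, 1 ≤ a i) {U V : ι → Set X}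
    (hU : ∀ i, IsOpen (U i)) (hUne : ∀ i, (U i).Nonempty)
    (hV : ∀ i, IsOpen (V i)) (hVne : ∀ i, (V i).Nonempty) :
    ∃ l : ℕ, 1 ≤ l ∧ ∀ i, (nComp f 0 (a i * l) '' U i ∩ V i).Nonempty := by
  cases isEmpty_or_nonempty ι with
  | inl _ => exact ⟨1, le_rfl, isEmptyElim⟩
  | inr _ =>
    let e := Finite.equivFin ι
    obtain ⟨l, hl, hit⟩ := h (Nat.card ι) Nat.card_pos (a ∘ e.symm) (fun _ => ha _)
      (U ∘ e.symm) (V ∘ e.symm) (fun _ => hU _) (fun _ => hUne _) (fun _ => hV _) (fun _ => hVne _)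
    exact ⟨l, hl, e.symm.forall_congr_right.1 hit⟩

protected theorem vecIter (h : StronglyMultiTransitive f) {r : ℕ} {a : Fin r → ℕ}
    (ha : ∀ i, 1 ≤ a i) : StronglyMultiTransitive (vecIter f a) := by
  intro p _ b hb U V hU hUne hV hVne
  choose u hu hune huU using fun j => exists_univ_pi_subset_of_isOpen (hU j) (hUne j)
  choose v hv hvne hvV using fun j => exists_univ_pi_subset_of_isOpen (hV j) (hVne j)
  obtain ⟨l, hl, hit⟩ := h.exists_forall_nonempty
    (a := fun q : Fin p × Fin r => a q.2 * b q.1) (fun q => Nat.mul_pos (ha q.2) (hb q.1))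
    (fun q => hu q.1 q.2) (fun q => hune q.1 q.2) (fun q => hv q.1 q.2) (fun q => hvne q.1 q.2)
  refine ⟨l, hl, fun j => ?_⟩
  have box_hit : (nComp (vecIter f a) 0 (b j * l) '' univ.pi (u j) ∩ univ.pi (v j)).Nonempty := by
    rw [nComp_vecIter, piMap_image_univ_pi_inter_nonempty_iff]
    intro i
    simpa only [Nat.mul_zero, Nat.mul_assoc] using hit (j, i)
  exact box_hit.mono (inter_subset_inter (image_mono (huU j)) (hvV j))

theorem of_semiconj (h : StronglyMultiTransitive f) {g : ℕ → Y → Y} {π : X → Y}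
    (hcont : Continuous π) (hsurj : Function.Surjective π)
    (hπ : ∀ n, Function.Semiconj π (f n) (g n)) : StronglyMultiTransitive g := by
  intro p hp b hb U V hU hUne hV hVne
  obtain ⟨l, hl, hit⟩ := h p hp b hb (fun j => π ⁻¹' U j) (fun j => π ⁻¹' V j)
    (fun j => (hU j).preimage hcont) (fun j => (hUne j).preimage hsurj)
    (fun j => (hV j).preimage hcont) (fun j => (hVne j).preimage hsurj)
  refine ⟨l, hl, fun j => ?_⟩
  obtain ⟨_, ⟨x, hxU, rfl⟩, hxV⟩ := hit j
  rw [mem_preimage, semiconj_nComp hπ 0 (b j * l) x] at hxV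
  exact ⟨_, mem_image_of_mem _ hxU, hxV⟩

theorem of_iterNDS {k : ℕ} (hk : 1 ≤ k) (h : StronglyMultiTransitive (iterNDS f k)) :
    StronglyMultiTransitive f := by
  intro p hp b hb U V hU hUne hV hVne
  obtain ⟨l, hl, hit⟩ := h p hp b hb U V hU hUne hV hVne
  refine ⟨k * l, Nat.mul_pos hk hl, fun j => ?_⟩
  simpa only [nComp_iterNDS, Nat.mul_zero, Nat.mul_left_comm] using hit j

theorem iterNDS_of_vecIter {r : ℕ} {a : Fin r → ℕ} (h : StronglyMultiTransitive (vecIter f a))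
    (i : Fin r) : StronglyMultiTransitive (iterNDS f (a i)) :=
  h.of_semiconj (continuous_apply i) (fun x => ⟨fun _ => x, rfl⟩) (semiconj_eval_vecIter f a i)

end StronglyMultiTransitive

theorem stronglyMultiTransitive_iff_vecIter_general {X : Type*} [TopologicalSpace X]
    (f : ℕ → X → X) (r : ℕ) (hr : 1 ≤ r) (a : Fin r → ℕ) (ha : ∀ i, 1 ≤ a i) :
    StronglyMultiTransitive f ↔ StronglyMultiTransitive (vecIter f a) where
  mp h := h.vecIter ha
  mpr h := .of_iterNDS (ha ⟨0, hr⟩) (h.iterNDS_of_vecIter ⟨0, hr⟩)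

/-- an NDS is strongly multi-transitive iff the product NDS
`(X^r, f^{[a]})` is strongly multi-transitive. -/
theorem stronglyMultiTransitive_iff_vecIter {X : Type*} [MetricSpace X] [CompactSpace X]
    (f : ℕ → X → X) (hf : ∀ n, Continuous (f n))
    (r : ℕ) (hr : 1 ≤ r) (a : Fin r → ℕ) (ha : ∀ i, 1 ≤ a i) :
    StronglyMultiTransitive f ↔ StronglyMultiTransitive (vecIter f a) :=
  stronglyMultiTransitive_iff_vecIter_general f r hr a ha
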